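/- arXiv:2310.12925 — 3 statements merged into one kernel-verified Lean document; each statement's English description precedes it below -/
import Mathlib

section
/- Let C be a preadditive category with finite limits and finite biproducts. Assume: (i) every kernel pair in C (the pullback of a morphism along itself) admits a coequalizer; (ii) regular epimorphisms in C are stable under pullback (the pullback of a regular epimorphism along any morphism is a regular epimorphism); (iii) every equivalence relation in C is effective. Then C is an abelian category: C has finite colimits, every monomorphism in C is a kernel, and every epimorphism in C is a cokernel. -/
open CategoryTheory Limits

/-- An equivalence relation on `X`: a pair `p₁ p₂ : R ⟶ X` which is jointly monic and admits
reflexivity, symmetry and transitivity morphisms. -/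
structure IsEquivRelation {C : Type*} [Category C] [HasFiniteLimits C]
    {R X : C} (p₁ p₂ : R ⟶ X) : Prop where
  mono : Mono (prod.lift p₁ p₂)
  refl : ∃ r : X ⟶ R, r ≫ p₁ = 𝟙 X ∧ r ≫ p₂ = 𝟙 X
  symm : ∃ s : R ⟶ R, s ≫ p₁ = p₂ ∧ s ≫ p₂ = p₁
  trans : ∃ t : pullback p₂ p₁ ⟶ R,
    t ≫ p₁ = pullback.fst p₂ p₁ ≫ p₁ ∧ t ≫ p₂ = pullback.snd p₂ p₁ ≫ p₂

/-!
A monomorphism `f : A ⟶ X` makes `A` act on `X` by translations, and `x ∼ x + f a` is an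
equivalence relation on `X` with projections `biprod.snd` and `biprod.desc f (𝟙 X)` from `A ⊞ X`.
Its coequalizer is the cokernel of `f`, and `f` is recovered as the class of `0`; so effectiveness
of this relation says that `f` is the kernel of its cokernel. Hence every monomorphism is normal
and `C` is balanced. As `C` is regular, every morphism is an epimorphism followed by a
monomorphism, which reduces cokernels to those of monomorphisms, and in a balanced regular category
every epimorphism is regular, hence normal by taking differences of parallel pairs.
-/

section Regular

variable {C : Type*} [Category C]

theorem hasCoequalizer_of_isKernelPair {X Y R : C} {f : X ⟶ Y} {p₁ p₂ : R ⟶ X}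
    (h : IsKernelPair f p₁ p₂) [HasPullback f f]
    [HasCoequalizer (pullback.fst f f) (pullback.snd f f)] : HasCoequalizer p₁ p₂ :=
  let e : parallelPair p₁ p₂ ≅ parallelPair (pullback.fst f f) (pullback.snd f f) :=
    parallelPair.ext h.isoPullback (Iso.refl X) (by simp) (by simp)
  hasColimit_of_iso e

theorem regular_of_hasCoequalizer_of_regularEpi_pullback_snd [HasFiniteLimits C]
    (hasCoequalizer : ∀ ⦃X Y : C⦄ (f : X ⟶ Y),
      HasCoequalizer (pullback.fst f f) (pullback.snd f f))
    (regularEpi_snd : ∀ ⦃X Y Z : C⦄ (f : X ⟶ Y) (g : Z ⟶ Y), RegularEpi f →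
      RegularEpi (pullback.snd f g)) :
    Regular C where
  hasCoequalizer_of_isKernelPair {_ _ _ f _ _} h :=
    have := hasCoequalizer f
    hasCoequalizer_of_isKernelPair h
  regularEpiIsStableUnderBaseChange :=
    .of_forall_exists_isPullback fun f g _ ⟨⟨hg⟩⟩ =>
      ⟨_, _, _, (IsPullback.of_hasPullback g f).flip, ⟨⟨regularEpi_snd g f hg⟩⟩⟩

theorem extremalEpi_of_epi [Balanced C] {X Y : C} (f : X ⟶ Y) [Epi f] : ExtremalEpi f where
  isIso _ i fac _ :=
    have : Epi i := epi_of_epi_fac fac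
    isIso_of_mono_of_epi i

theorem hasCokernels_of_hasCokernel_mono [HasZeroMorphisms C] [HasStrongEpiMonoFactorisations C]
    (hasCokernel : ∀ ⦃X Y : C⦄ (f : X ⟶ Y) [Mono f], HasCokernel f) : HasCokernels C where
  has_colimit {X Y} f := by
    obtain ⟨F⟩ := HasStrongEpiMonoFactorisations.has_fac f
    have := hasCokernel F.m
    rw [← F.fac]
    infer_instance

end Regular

section Preadditive

variable {C : Type*} [Category C] [Preadditive C]

theorem nonempty_normalEpi_of_isRegularEpi {X Y : C} (f : X ⟶ Y) [IsRegularEpi f] :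
    Nonempty (NormalEpi f) :=
  ⟨{ W := IsRegularEpi.W f
     g := IsRegularEpi.left f - IsRegularEpi.right f
     w := by rw [Preadditive.sub_comp, IsRegularEpi.w, sub_self]
     isColimit := Preadditive.isColimitCokernelCoforkOfCofork (IsRegularEpi.isColimit f) }⟩

section Translation

variable {A X : C} (f : A ⟶ X) [HasBinaryBiproduct A X]

theorem biprod_snd_comp_eq_desc_id_comp_iff {Z : C} (k : X ⟶ Z) :
    (biprod.snd : A ⊞ X ⟶ X) ≫ k = biprod.desc f (𝟙 X) ≫ k ↔ f ≫ k = 0 := by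
  rw [biprod.desc_eq, Category.comp_id, Preadditive.add_comp, right_eq_add, Category.assoc]
  exact ⟨fun h => by simpa using biprod.inl ≫= h, fun h => by rw [h, comp_zero]⟩

theorem hasCokernel_of_hasCoequalizer_biprod_snd_desc_id
    [HasCoequalizer (biprod.snd : A ⊞ X ⟶ X) (biprod.desc f (𝟙 X))] : HasCokernel f :=
  let q := coequalizer.π (biprod.snd : A ⊞ X ⟶ X) (biprod.desc f (𝟙 X))
  have w : f ≫ q = 0 := (biprod_snd_comp_eq_desc_id_comp_iff f q).1 (coequalizer.condition _ _)
  HasColimit.mk ⟨_, CokernelCofork.IsColimit.ofπ' q w fun k hk =>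
    coequalizer.desc' k ((biprod_snd_comp_eq_desc_id_comp_iff f k).2 hk)⟩

theorem nonempty_normalMono_of_isKernelPair_biprod_snd_desc_id [Mono f] {Q : C} {q : X ⟶ Q}
    (h : IsKernelPair q (biprod.snd : A ⊞ X ⟶ X) (biprod.desc f (𝟙 X))) :
    Nonempty (NormalMono f) := by
  have w : f ≫ q = 0 := (biprod_snd_comp_eq_desc_id_comp_iff f q).1 h.w
  have exists_lift : ∀ {T : C} (k : T ⟶ X), k ≫ q = 0 → ∃ l : T ⟶ A, l ≫ f = k := by
    intro T k hk
    obtain ⟨r, hr₁, hr₂⟩ := h.exists_lift 0 k (by rw [zero_comp, hk])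
    refine ⟨r ≫ biprod.fst, ?_⟩
    simpa [biprod.desc_eq, hr₁] using hr₂
  exact ⟨⟨Q, q, w, KernelFork.IsLimit.ofι' f w fun k hk =>
    ⟨(exists_lift k hk).choose, (exists_lift k hk).choose_spec⟩⟩⟩

theorem isEquivRelation_biprod_snd_desc_id [HasFiniteLimits C] [Mono f] :
    IsEquivRelation (biprod.snd : A ⊞ X ⟶ X) (biprod.desc f (𝟙 X)) where
  mono := by
    rw [Preadditive.mono_iff_cancel_zero]
    intro T g hg
    have hg_snd : g ≫ biprod.snd = 0 := by
      simpa only [Category.assoc, prod.lift_fst, zero_comp] using hg =≫ prod.fst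
    have hg_desc : g ≫ biprod.desc f (𝟙 X) = 0 := by
      simpa only [Category.assoc, prod.lift_snd, zero_comp] using hg =≫ prod.snd
    have hg_fst : g ≫ biprod.fst = 0 :=
      zero_of_comp_mono f (by simpa [biprod.desc_eq, hg_snd] using hg_desc)
    apply biprod.hom_ext <;> simp [hg_fst, hg_snd]
  refl := ⟨biprod.inr, by simp, by simp⟩
  symm := ⟨biprod.lift (-biprod.fst) (biprod.desc f (𝟙 X)), by simp, by simp [biprod.desc_eq]⟩
  trans := by
    let q₁ := pullback.fst (biprod.desc f (𝟙 X)) (biprod.snd : A ⊞ X ⟶ X)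
    let q₂ := pullback.snd (biprod.desc f (𝟙 X)) (biprod.snd : A ⊞ X ⟶ X)
    have condition : q₁ ≫ biprod.fst ≫ f + q₁ ≫ biprod.snd = q₂ ≫ biprod.snd := by
      simpa [biprod.desc_eq] using
        pullback.condition (f := biprod.desc f (𝟙 X)) (g := (biprod.snd : A ⊞ X ⟶ X))
    let t := biprod.lift (q₁ ≫ biprod.fst + q₂ ≫ biprod.fst) (q₁ ≫ biprod.snd)
    refine ⟨t, by simp [t, q₁], ?_⟩
    calc t ≫ biprod.desc f (𝟙 X)
        = q₂ ≫ biprod.fst ≫ f + (q₁ ≫ biprod.fst ≫ f + q₁ ≫ biprod.snd) := by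
          simp only [t, biprod.lift_desc, Preadditive.add_comp, Category.assoc, Category.comp_id]
          abel
      _ = q₂ ≫ biprod.desc f (𝟙 X) := by simp [condition, biprod.desc_eq]

end Translation

end Preadditive

/-- A preadditive, finitely complete, (Barr-)exact category with finite biproducts is abelian:
it has finite colimits, every monomorphism is normal and every epimorphism is normal. -/
theorem abelian_of_additive_exact
    {C : Type*} [Category C] [Preadditive C] [HasFiniteLimits C] [HasFiniteBiproducts C]
    -- (i) kernel pairs admit coequalizers
    (h₁ : ∀ ⦃X Y : C⦄ (f : X ⟶ Y), HasCoequalizer (pullback.fst f f) (pullback.snd f f))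
    -- (ii) regular epimorphisms are stable under pullback
    (h₂ : ∀ ⦃X Y Z : C⦄ (f : X ⟶ Y) (g : Z ⟶ Y), RegularEpi f →
      RegularEpi (pullback.snd f g))
    -- (iii) every equivalence relation is effective
    (h₃ : ∀ ⦃R X : C⦄ (p₁ p₂ : R ⟶ X), IsEquivRelation p₁ p₂ →
      ∃ (Q : C) (q : X ⟶ Q) (w : p₁ ≫ q = p₂ ≫ q),
        Nonempty (IsColimit (Cofork.ofπ q w)) ∧ IsPullback p₁ p₂ q q) :
    HasFiniteColimits C ∧
      (∀ ⦃X Y : C⦄ (f : X ⟶ Y), Mono f → Nonempty (NormalMono f)) ∧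
      (∀ ⦃X Y : C⦄ (f : X ⟶ Y), Epi f → Nonempty (NormalEpi f)) := by
  have := hasBinaryBiproducts_of_finite_biproducts C
  have : Regular C := regular_of_hasCoequalizer_of_regularEpi_pullback_snd h₁ h₂
  have : IsNormalMonoCategory C :=
    { normalMonoOfMono := fun f _ =>
        have ⟨_, _, _, _, isKernelPair⟩ := h₃ _ _ (isEquivRelation_biprod_snd_desc_id f)
        nonempty_normalMono_of_isKernelPair_biprod_snd_desc_id f isKernelPair }
  have : HasCokernels C := hasCokernels_of_hasCokernel_mono fun A X f _ =>
    have ⟨_, _, _, ⟨isCoequalizer⟩, _⟩ := h₃ _ _ (isEquivRelation_biprod_snd_desc_id f)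
    have : HasCoequalizer (biprod.snd : A ⊞ X ⟶ X) (biprod.desc f (𝟙 X)) :=
      HasColimit.mk ⟨_, isCoequalizer⟩
    hasCokernel_of_hasCoequalizer_biprod_snd_desc_id f
  have : HasCoequalizers C := Preadditive.hasCoequalizers_of_hasCokernels
  refine ⟨hasFiniteColimits_of_hasCoequalizers_and_finite_coproducts,
    fun _ _ f _ => IsNormalMonoCategory.normalMonoOfMono f, fun _ _ f _ => ?_⟩
  have := extremalEpi_of_epi f
  exact nonempty_normalEpi_of_isRegularEpi f
end

section
/- Let C be an abelian category and let p₁ p₂ : R ⟶ X be an equivalence relation on an object X of C (so (p₁,p₂) : R ⟶ X ⨯ X is a monomorphism admitting reflexivity, symmetry and transitivity morphisms). Let q : X ⟶ Q be the coequalizer of p₁ and p₂. Then (p₁, p₂) is the kernel pair of q, i.e. the square with sides p₁, p₂, q, q is a pullback square. -/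
open CategoryTheory Limits

/-!
Let `r` be a common section of `p₁` and `p₂`. Subtracting `p₁ ≫ r` identifies `R` with
`X ⊕ kernel p₁`, so that `R` relates `a` and `b` exactly when `b - a` lies in the image of
`m := kernel.ι p₁ ≫ p₂`. Joint monicity makes `m` a monomorphism, hence the kernel of some `g`,
and then `b - a` lies in this image if and only if `a` and `b` agree after composing with `g`: the
relation is the kernel pair of `g`. A kernel pair is also the kernel pair of its coequalizer.
-/

section JointlyMono

variable {C : Type*} [Category C] {R X Y : C} (f : R ⟶ X) (g : R ⟶ Y)

theorem jointlyMono₂_of_mono_prod_lift [HasBinaryProduct X Y] [Mono (prod.lift f g)] :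
    JointlyMono₂ f g where
  right_cancellation _ a b hf hg := by
    rw [← cancel_mono (prod.lift f g), prod.comp_lift, prod.comp_lift, hf, hg]

theorem jointlyMono₂_iff_mono_kernel_ι_comp [Preadditive C] [HasKernel f] :
    JointlyMono₂ f g ↔ Mono (kernel.ι f ≫ g) := by
  constructor
  · refine fun _ ↦ ⟨fun a b hab ↦ ?_⟩
    rw [← cancel_mono (kernel.ι f)]
    exact JointlyMono₂.right_cancellation (p₁ := f) (p₂ := g) _ _ (by simp) (by simpa using hab)
  · refine fun _ ↦ ⟨fun T a b hf hg ↦ ?_⟩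
    have hker : (a - b) ≫ f = 0 := by rw [Preadditive.sub_comp, hf, sub_self]
    have hlift : kernel.lift f (a - b) hker = 0 := by
      apply zero_of_comp_mono (kernel.ι f ≫ g)
      rw [kernel.lift_ι_assoc, Preadditive.sub_comp, hg, sub_self]
    rw [← sub_eq_zero, ← kernel.lift_ι f (a - b) hker, hlift, zero_comp]

end JointlyMono

theorem isKernelPair_π_of_isColimit {C : Type*} [Category C] {R X Y : C} {p₁ p₂ : R ⟶ X}
    {f : X ⟶ Y} (hf : IsKernelPair f p₁ p₂) {c : Cofork p₁ p₂} (hc : IsColimit c) :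
    IsKernelPair c.π p₁ p₂ := by
  obtain ⟨d, rfl⟩ := Cofork.IsColimit.desc' hc f hf.w
  exact hf.cancel_right c.condition

section ReflexivePair

variable {C : Type*} [Category C] [Preadditive C] {R X : C} (p₁ p₂ : R ⟶ X)
  [IsReflexivePair p₁ p₂] [HasKernel p₁]

theorem comp_eq_comp_of_kernel_ι_comp_eq_zero {Y : C} {g : X ⟶ Y}
    (hg : (kernel.ι p₁ ≫ p₂) ≫ g = 0) : p₁ ≫ g = p₂ ≫ g := by
  let r := commonSection p₁ p₂
  have hker : (𝟙 R - p₁ ≫ r) ≫ p₁ = 0 := by simp [r]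
  have hfactor : kernel.lift p₁ (𝟙 R - p₁ ≫ r) hker ≫ kernel.ι p₁ ≫ p₂ = p₂ - p₁ := by
    simp [r]
  rw [eq_comm, ← sub_eq_zero, ← Preadditive.sub_comp, ← hfactor, Category.assoc, hg, comp_zero]

variable {p₁ p₂}

theorem isKernelPair_of_isLimit_kernelFork {Y : C} {g : X ⟶ Y}
    {w : (kernel.ι p₁ ≫ p₂) ≫ g = 0} (hm : IsLimit (KernelFork.ofι (kernel.ι p₁ ≫ p₂) w)) :
    IsKernelPair g p₁ p₂ := by
  have : Mono (kernel.ι p₁ ≫ p₂) := mono_of_isLimit_fork hm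
  have : JointlyMono₂ p₁ p₂ := (jointlyMono₂_iff_mono_kernel_ι_comp p₁ p₂).2 ‹_›
  refine IsPullback.mk' (comp_eq_comp_of_kernel_ι_comp_eq_zero p₁ p₂ w)
    (fun _ _ _ ↦ JointlyMono₂.right_cancellation _ _) fun T a b hab ↦ ?_
  have hdiff : (b - a) ≫ g = 0 := by rw [Preadditive.sub_comp, hab, sub_self]
  obtain ⟨k, hk : k ≫ kernel.ι p₁ ≫ p₂ = b - a⟩ := KernelFork.IsLimit.lift' hm (b - a) hdiff
  exact ⟨a ≫ commonSection p₁ p₂ + k ≫ kernel.ι p₁, by simp, by simp [hk]⟩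

theorem equivRelation_effective_of_abelian_general [IsNormalMonoCategory C] [JointlyMono₂ p₁ p₂]
    {c : Cofork p₁ p₂} (hc : IsColimit c) : IsKernelPair c.π p₁ p₂ := by
  have : Mono (kernel.ι p₁ ≫ p₂) := (jointlyMono₂_iff_mono_kernel_ι_comp p₁ p₂).1 ‹_›
  have hnormal : NormalMono (kernel.ι p₁ ≫ p₂) := normalMonoOfMono _
  exact isKernelPair_π_of_isColimit (isKernelPair_of_isLimit_kernelFork hnormal.isLimit) hc

end ReflexivePair

/-- In an abelian category, every equivalence relation is effective: it is the kernel pair of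
its coequalizer. -/
theorem equivRelation_effective_of_abelian
    {C : Type*} [Category C] [Abelian C] {R X : C} (p₁ p₂ : R ⟶ X)
    (h : IsEquivRelation p₁ p₂) :
    IsPullback p₁ p₂ (coequalizer.π p₁ p₂) (coequalizer.π p₁ p₂) := by
  have := h.mono
  have := jointlyMono₂_of_mono_prod_lift p₁ p₂
  have : IsReflexivePair p₁ p₂ := ⟨h.refl⟩
  exact equivRelation_effective_of_abelian_general (colimit.isColimit (parallelPair p₁ p₂))
end

section
/- Let C be a small category with finite limits. Then C is an abelian category if and only if the category Ind C of ind-objects of C is an abelian category. -/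
open CategoryTheory Limits

/-!
That `Ind C` is abelian if `C` is, is in Mathlib. For the converse, let `y : C ⥤ Ind C` be the
canonical functor and let `Z` be the colimit in `Ind C` of a finite diagram `y ∘ K`. The category of
objects of `C` over `Z` is filtered, so the colimit cocone, seen as a finite diagram in it, has a
cocone, and this exhibits `Z` as a retract of some `y W`. Idempotents split in `C`, so `Z` itself
comes from `C`. Hence `C` has finite colimits, `y` is exact and conservative, and the isomorphism
between coimages and images descends from `Ind C` to `C`.
-/

section

variable {C D : Type*} [Category* C] [Category* D]

theorem exists_retract_obj_of_isColimit (F : C ⥤ D) [RepresentablyCoflat F]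
    {J : Type*} [SmallCategory J] [FinCategory J] {K : J ⥤ C} {c : Cocone (K ⋙ F)}
    (hc : IsColimit c) : ∃ W : C, Nonempty (Retract c.pt (F.obj W)) := by
  let overPt : J ⥤ CostructuredArrow F c.pt := K.toCostructuredArrow F c.pt c.ι.app c.w
  let bound : Cocone overPt := IsFiltered.cocone overPt
  let imageCocone : Cocone (K ⋙ F) :=
    F.mapCocone ((CostructuredArrow.proj F c.pt).mapCocone bound)
  let toPt : imageCocone.pt ⟶ c.pt := bound.pt.hom
  have ι_comp_toPt (j : J) : imageCocone.ι.app j ≫ toPt = c.ι.app j :=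
    CostructuredArrow.w (bound.ι.app j)
  have desc_comp_toPt : hc.desc imageCocone ≫ toPt = 𝟙 c.pt :=
    hc.hom_ext fun j ↦ by rw [hc.fac_assoc, ι_comp_toPt, Category.comp_id]
  exact ⟨bound.pt.left, ⟨hc.desc imageCocone, toPt, desc_comp_toPt⟩⟩

instance essImage_isStableUnderRetracts (F : C ⥤ D) [F.Full] [F.Faithful]
    [IsIdempotentComplete C] : F.essImage.IsStableUnderRetracts where
  of_retract {Z Y} ρ := by
    rintro ⟨W, ⟨e⟩⟩
    let σ : Retract Z (F.obj W) := ρ.trans (.ofIso e.symm)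
    obtain ⟨V, i, p, hip, hpi⟩ := IsIdempotentComplete.idempotents_split W
      (F.preimage (σ.r ≫ σ.i)) (F.map_injective (by simp))
    have map_ip : F.map i ≫ F.map p = 𝟙 _ := by rw [← F.map_comp, hip, F.map_id]
    have map_pi : F.map p ≫ F.map i = σ.r ≫ σ.i := by rw [← F.map_comp, hpi, F.map_preimage]
    exact ⟨V, ⟨{
      hom := F.map i ≫ σ.r
      inv := σ.i ≫ F.map p
      hom_inv_id := by
        rw [Category.assoc, ← reassoc_of% map_pi, map_ip, Category.comp_id, map_ip]
      inv_hom_id := by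
        rw [Category.assoc, reassoc_of% map_pi, σ.retract, Category.comp_id, σ.retract] }⟩⟩

theorem hasFiniteColimits_of_representablyCoflat (F : C ⥤ D) [F.Full] [F.Faithful]
    [RepresentablyCoflat F] [IsIdempotentComplete C] [HasFiniteColimits D] :
    HasFiniteColimits C where
  out J _ _ := ⟨fun K ↦ by
    obtain ⟨W, ⟨ρ⟩⟩ := exists_retract_obj_of_isColimit F (colimit.isColimit (K ⋙ F))
    obtain ⟨V, ⟨e⟩⟩ := F.essImage.prop_of_retract ρ (F.obj_mem_essImage W)
    have : CreatesColimit K F := createsColimitOfFullyFaithfulOfIso V e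
    exact hasColimit_of_created K F⟩

/-- A preadditive category with kernels, cokernels and finite products is abelian as soon as it
admits a conservative functor to an abelian category that preserves kernels and cokernels. The
preservation hypotheses are phrased with (co)equalizers, of which (co)kernels are a special case. -/
noncomputable abbrev abelianOfReflectsIsomorphisms [Preadditive C] [HasKernels C] [HasCokernels C]
    [HasFiniteProducts C] [Abelian D] (F : C ⥤ D) [F.PreservesZeroMorphisms]
    [PreservesLimitsOfShape WalkingParallelPair F]
    [PreservesColimitsOfShape WalkingParallelPair F] [F.ReflectsIsomorphisms] : Abelian C :=
  have {X Y : C} (f : X ⟶ Y) : IsIso (Abelian.coimageImageComparison f) := by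
    have : IsIso (F.map (Abelian.coimageImageComparison f)) := by
      rw [Arrow.isIso_iff_isIso_of_isIso (Abelian.PreservesCoimageImageComparison.iso F f).hom]
      infer_instance
    exact isIso_of_reflects_iso _ F
  .ofCoimageImageComparisonIsIso

theorem isIdempotentComplete_of_hasEqualizers [HasEqualizers C] : IsIdempotentComplete C :=
  (Idempotents.isIdempotentComplete_iff_hasEqualizer_of_id_and_idempotent C).2
    fun _ _ _ ↦ inferInstance

theorem nonempty_abelian_of_representablyCoflat [HasEqualizers C] [Abelian D] (F : C ⥤ D)
    [F.Full] [F.Faithful] [RepresentablyCoflat F]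
    [PreservesLimitsOfShape WalkingParallelPair F] : Nonempty (Abelian C) := by
  let : Preadditive C := .ofFullyFaithful (.ofFullyFaithful F)
  have : F.Additive := (Functor.FullyFaithful.ofFullyFaithful F).additive_ofFullyFaithful
  have : IsIdempotentComplete C := isIdempotentComplete_of_hasEqualizers
  have : HasFiniteColimits C := hasFiniteColimits_of_representablyCoflat F
  have : HasFiniteBiproducts C := .of_hasFiniteCoproducts
  have : PreservesFiniteColimits F := preservesFiniteColimits_of_coflat F
  exact ⟨abelianOfReflectsIsomorphisms F⟩

end

theorem abelian_iff_ind_abelian_general (C : Type*) [SmallCategory C] [HasEqualizers C] :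
    Nonempty (Abelian C) ↔ Nonempty (Abelian (Ind C)) :=
  ⟨fun ⟨_⟩ ↦ ⟨inferInstance⟩, fun ⟨_⟩ ↦ nonempty_abelian_of_representablyCoflat Ind.yoneda⟩

/-- A small, finitely complete category is abelian if and only if its category of
ind-objects is abelian. -/
theorem abelian_iff_ind_abelian (C : Type u) [SmallCategory C] [HasFiniteLimits C] :
    Nonempty (Abelian C) ↔ Nonempty (Abelian (Ind C)) :=
  abelian_iff_ind_abelian_general C
end
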